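/- arXiv:2402.15152 — 2 statements merged into one kernel-verified Lean document; each statement's English description precedes it below -/
import Mathlib

section
/- The function u is strictly increasing on (−∞, w₁*] and strictly decreasing on [w₁*, ∞), where w₁* = (ln p − ln(1 − p))/(2η); equivalently, its derivative u′ satisfies u′(w) > 0 for w < w₁* and u′(w) < 0 for w > w₁*. -/
/-!
By the fundamental theorem of calculus and the chain rule, `u′(w)` is a combination of two Gaussian
densities. Expanding the squares `(±w + η n)² / n = w² / n ± 2 η w + η² n` and pulling out the
common positive factor leaves

  `u′(w) = K(w) * (p * exp (-η w) - (1 - p) * exp (η w))`, with `K(w) > 0`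

(`hasDerivAt_u`). The bracket is positive exactly when `2 η w < log p - log (1 - p)`, which gives
the sign of `u′` on both sides of `w₁*`; monotonicity then follows from the mean value theorem.
-/

/-- The standard normal CDF. -/
noncomputable def Phi (t : ℝ) : ℝ :=
  (Real.sqrt (2 * Real.pi))⁻¹ * ∫ s in Set.Iic t, Real.exp (-(s ^ 2) / 2)

/-- The expected clean accuracy `u(w)` for parameters `p`, `η`, `n`. -/
noncomputable def u (p η : ℝ) (n : ℕ) (w : ℝ) : ℝ :=
  p * Phi ((w + η * n) / Real.sqrt n) + (1 - p) * Phi ((-w + η * n) / Real.sqrt n)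

theorem hasDerivAt_Phi (t : ℝ) :
    HasDerivAt Phi ((Real.sqrt (2 * Real.pi))⁻¹ * Real.exp (-(t ^ 2) / 2)) t := by
  have hcont : Continuous fun s : ℝ => Real.exp (-(s ^ 2) / 2) := by fun_prop
  have hint : MeasureTheory.Integrable fun s : ℝ => Real.exp (-(s ^ 2) / 2) := by
    convert integrable_exp_neg_mul_sq (b := 1 / 2) (by norm_num) using 3
    ring
  have hFTC : HasDerivAt (fun x => ∫ s in (0 : ℝ)..x, Real.exp (-(s ^ 2) / 2))
      (Real.exp (-(t ^ 2) / 2)) t :=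
    intervalIntegral.integral_hasDerivAt_right (hcont.intervalIntegrable _ _)
      hcont.aestronglyMeasurable.stronglyMeasurableAtFilter hcont.continuousAt
  have hsplit : Phi = fun x => (Real.sqrt (2 * Real.pi))⁻¹ *
      ((∫ s in (0 : ℝ)..x, Real.exp (-(s ^ 2) / 2)) +
        ∫ s in Set.Iic (0 : ℝ), Real.exp (-(s ^ 2) / 2)) := by
    funext x
    rw [← intervalIntegral.integral_Iic_sub_Iic hint.integrableOn hint.integrableOn, Phi]
    ring
  rw [hsplit]
  exact (hFTC.add_const _).const_mul _

/-- The positive factor shared by the two Gaussian densities in `u′(w)`. -/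
noncomputable def commonFactor (η : ℝ) (n : ℕ) (w : ℝ) : ℝ :=
  (Real.sqrt (2 * Real.pi))⁻¹ * (Real.sqrt n)⁻¹ * Real.exp (-(w ^ 2 / n + η ^ 2 * n) / 2)

theorem commonFactor_pos (η : ℝ) {n : ℕ} (hn : 0 < n) (w : ℝ) : 0 < commonFactor η n w := by
  have : (0 : ℝ) < n := by exact_mod_cast hn
  unfold commonFactor
  positivity

theorem hasDerivAt_u (p η : ℝ) {n : ℕ} (hn : 0 < n) (w : ℝ) :
    HasDerivAt (u p η n)
      (commonFactor η n w * (p * Real.exp (-(η * w)) - (1 - p) * Real.exp (η * w))) w := by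
  have hn' : (0 : ℝ) < n := by exact_mod_cast hn
  have hplus : HasDerivAt (fun w : ℝ => (w + η * n) / Real.sqrt n) (1 / Real.sqrt n) w :=
    ((hasDerivAt_id w).add_const _).div_const _
  have hminus : HasDerivAt (fun w : ℝ => (-w + η * n) / Real.sqrt n) (-1 / Real.sqrt n) w :=
    ((hasDerivAt_id w).neg.add_const _).div_const _
  have hderiv := (((hasDerivAt_Phi _).comp w hplus).const_mul p).add
    (((hasDerivAt_Phi _).comp w hminus).const_mul (1 - p))
  have hexp_plus : Real.exp (-(((w + η * n) / Real.sqrt n) ^ 2) / 2) =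
      Real.exp (-(w ^ 2 / n + η ^ 2 * n) / 2) * Real.exp (-(η * w)) := by
    rw [← Real.exp_add, div_pow, Real.sq_sqrt hn'.le]
    congr 1
    field_simp
    ring
  have hexp_minus : Real.exp (-(((-w + η * n) / Real.sqrt n) ^ 2) / 2) =
      Real.exp (-(w ^ 2 / n + η ^ 2 * n) / 2) * Real.exp (η * w) := by
    rw [← Real.exp_add, div_pow, Real.sq_sqrt hn'.le]
    congr 1
    field_simp
    ring
  rw [hexp_plus, hexp_minus] at hderiv
  refine HasDerivAt.congr_deriv hderiv ?_
  unfold commonFactor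
  ring

/-- `u` is strictly increasing on `(−∞, w₁*]` and strictly decreasing on `[w₁*, ∞)`;
equivalently `u′(w) > 0` for `w < w₁*` and `u′(w) < 0` for `w > w₁*`. -/
theorem u_monotonicity
    (p η : ℝ) (n : ℕ) (hp : 1 / 2 < p) (hp1 : p < 1) (hη : 0 < η) (hn : 0 < n) :
    StrictMonoOn (u p η n) (Set.Iic ((Real.log p - Real.log (1 - p)) / (2 * η))) ∧
    StrictAntiOn (u p η n) (Set.Ici ((Real.log p - Real.log (1 - p)) / (2 * η))) ∧
    (∀ w : ℝ, w < (Real.log p - Real.log (1 - p)) / (2 * η) → 0 < deriv (u p η n) w) ∧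
    (∀ w : ℝ, (Real.log p - Real.log (1 - p)) / (2 * η) < w → deriv (u p η n) w < 0) := by
  have hp0 : 0 < p := by linarith
  have hq0 : 0 < 1 - p := by linarith
  -- With `p` and `1 - p` written as exponentials of their logarithms, the sign of the bracket in
  -- `hasDerivAt_u` is a comparison of exponents.
  have hp_exp (x : ℝ) : p * Real.exp x = Real.exp (Real.log p + x) := by
    rw [Real.exp_add, Real.exp_log hp0]
  have hq_exp (x : ℝ) : (1 - p) * Real.exp x = Real.exp (Real.log (1 - p) + x) := by
    rw [Real.exp_add, Real.exp_log hq0]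
  have hpos (w : ℝ) (hw : w < (Real.log p - Real.log (1 - p)) / (2 * η)) :
      0 < deriv (u p η n) w := by
    rw [lt_div_iff₀ (by positivity)] at hw
    rw [(hasDerivAt_u p η hn w).deriv, hp_exp, hq_exp]
    refine mul_pos (commonFactor_pos η hn w) (sub_pos.2 (Real.exp_lt_exp.2 ?_))
    linarith
  have hneg (w : ℝ) (hw : (Real.log p - Real.log (1 - p)) / (2 * η) < w) :
      deriv (u p η n) w < 0 := by
    rw [div_lt_iff₀ (by positivity)] at hw
    rw [(hasDerivAt_u p η hn w).deriv, hp_exp, hq_exp]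
    refine mul_neg_of_pos_of_neg (commonFactor_pos η hn w) (sub_neg.2 (Real.exp_lt_exp.2 ?_))
    linarith
  have hcont : Continuous (u p η n) :=
    continuous_iff_continuousAt.2 fun w => (hasDerivAt_u p η hn w).continuousAt
  refine ⟨strictMonoOn_of_deriv_pos (convex_Iic _) hcont.continuousOn ?_,
    strictAntiOn_of_deriv_neg (convex_Ici _) hcont.continuousOn ?_, hpos, hneg⟩
  · intro w hw
    rw [interior_Iic] at hw
    exact hpos w hw
  · intro w hw
    rw [interior_Ici] at hw
    exact hneg w hw
end

section
/- Let ε > 0 and suppose w ∈ ℝ satisfies u(w − ε) = u(w + ε). Then w − ε < w₁* < w + ε, where w₁* = (ln p − ln(1 − p))/(2η). -/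
theorem hasDerivAt_u_s13 (p η : ℝ) (n : ℕ) (x : ℝ) :
    HasDerivAt (u p η n)
      ((Real.sqrt (2 * Real.pi))⁻¹ / Real.sqrt n *
        (p * Real.exp (-(((x + η * n) / Real.sqrt n) ^ 2) / 2) -
          (1 - p) * Real.exp (-(((-x + η * n) / Real.sqrt n) ^ 2) / 2))) x := by
  have h1 : HasDerivAt (fun y : ℝ => (y + η * n) / Real.sqrt n) (1 / Real.sqrt n) x :=
    ((hasDerivAt_id x).add_const _).div_const _
  have h2 : HasDerivAt (fun y : ℝ => (-y + η * n) / Real.sqrt n) (-1 / Real.sqrt n) x :=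
    ((hasDerivAt_id x).neg.add_const _).div_const _
  have h := (((hasDerivAt_Phi _).comp x h1).const_mul p).add
    (((hasDerivAt_Phi _).comp x h2).const_mul (1 - p))
  refine h.congr_deriv ?_
  ring

/-- The comparison of the two weighted Gaussian densities, in logarithmic form. -/
theorem weighted_exp_lt_iff (p η : ℝ) (n : ℕ) (hp : 0 < p) (hp1 : p < 1) (hn : 0 < n) (x : ℝ) :
    ((1 - p) * Real.exp (-(((-x + η * n) / Real.sqrt n) ^ 2) / 2) <
        p * Real.exp (-(((x + η * n) / Real.sqrt n) ^ 2) / 2) ↔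
      2 * η * x < Real.log p - Real.log (1 - p)) ∧
    (p * Real.exp (-(((x + η * n) / Real.sqrt n) ^ 2) / 2) <
        (1 - p) * Real.exp (-(((-x + η * n) / Real.sqrt n) ^ 2) / 2) ↔
      Real.log p - Real.log (1 - p) < 2 * η * x) := by
  have hn' : (0 : ℝ) < n := by exact_mod_cast hn
  have hq : 0 < 1 - p := by linarith
  have hexp : -(((-x + η * n) / Real.sqrt n) ^ 2) / 2 =
      -(((x + η * n) / Real.sqrt n) ^ 2) / 2 + 2 * η * x := by
    rw [div_pow, div_pow, Real.sq_sqrt hn'.le]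
    field_simp
    ring
  rw [hexp]
  generalize -(((x + η * n) / Real.sqrt n) ^ 2) / 2 = a
  have e1 : p * Real.exp a = Real.exp (Real.log p + a) := by
    rw [Real.exp_add, Real.exp_log hp]
  have e2 : (1 - p) * Real.exp (a + 2 * η * x) =
      Real.exp (Real.log (1 - p) + (a + 2 * η * x)) := by
    rw [Real.exp_add (Real.log (1 - p)), Real.exp_log hq]
  rw [e1, e2, Real.exp_lt_exp, Real.exp_lt_exp]
  constructor <;> constructor <;> intro h <;> linarith

/-- If `u(w−ε) = u(w+ε)` with `ε > 0`, then `w − ε < w₁* < w + ε`. -/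
theorem balance_brackets_optimum
    (p η : ℝ) (n : ℕ) (hp : 1 / 2 < p) (hp1 : p < 1) (hη : 0 < η) (hn : 0 < n)
    (ε w : ℝ) (hε : 0 < ε) (hbal : u p η n (w - ε) = u p η n (w + ε)) :
    w - ε < (Real.log p - Real.log (1 - p)) / (2 * η) ∧
    (Real.log p - Real.log (1 - p)) / (2 * η) < w + ε := by
  have hn' : (0 : ℝ) < n := by exact_mod_cast hn
  have hη2 : 0 < 2 * η := by linarith
  have hc : 0 < (Real.sqrt (2 * Real.pi))⁻¹ / Real.sqrt n := by positivity
  have hcont : Continuous (u p η n) :=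
    continuous_iff_continuousAt.2 fun x => (hasDerivAt_u_s13 p η n x).continuousAt
  have hsign := weighted_exp_lt_iff p η n (by linarith) hp1 hn
  constructor
  · by_contra! hle
    have hanti : StrictAntiOn (u p η n)
        (Set.Ici ((Real.log p - Real.log (1 - p)) / (2 * η))) := by
      refine strictAntiOn_of_deriv_neg (convex_Ici _) hcont.continuousOn fun x hx => ?_
      rw [interior_Ici, Set.mem_Ioi, div_lt_iff₀' hη2] at hx
      rw [(hasDerivAt_u_s13 p η n x).deriv]
      exact mul_neg_of_pos_of_neg hc (sub_neg.2 ((hsign x).2.2 hx))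
    have := hanti (a := w - ε) (b := w + ε) hle (hle.trans (by linarith)) (by linarith)
    exact this.ne hbal.symm
  · by_contra! hle
    have hmono : StrictMonoOn (u p η n)
        (Set.Iic ((Real.log p - Real.log (1 - p)) / (2 * η))) := by
      refine strictMonoOn_of_deriv_pos (convex_Iic _) hcont.continuousOn fun x hx => ?_
      rw [interior_Iic, Set.mem_Iio, lt_div_iff₀' hη2] at hx
      rw [(hasDerivAt_u_s13 p η n x).deriv]
      exact mul_pos hc (sub_pos.2 ((hsign x).1.2 hx))
    have := hmono (a := w - ε) (b := w + ε)
      (le_trans (by linarith : w - ε ≤ w + ε) hle) hle (by linarith)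
    exact this.ne hbal
end
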